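/- For the win-lose game G = G(Ĝ, φ) constructed from an r-player win-lose game Ĝ with the positive utility property and a 3SAT formula φ with n ≥ 4 variables: if φ is satisfiable, then for each satisfying assignment γ of φ, the mixed profile σ = σ(γ) in which each special player i ∈ {1,2} plays each of the n literals set true by γ with probability 1/n and each player i ∈ {3,…,r} plays δ with probability 1, is a Nash equilibrium of G not belonging to NE(Ĝ); moreover σ_1 = σ_2 and for each i ∈ {1,2}: |Supp(σ_i)| = n, U_i(σ) = 2/n, and Supp(σ_i) ∩ Σ̂_i = ∅. -/

import Mathlib

open Finset

/-! ## Basic notions for finite strategic games -/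

/-- `x` is a probability distribution on the finite type `α`. -/
def IsDist {α : Type*} [Fintype α] (x : α → ℝ) : Prop :=
  (∀ s, 0 ≤ x s) ∧ ∑ s, x s = 1

/-- Expected utility of player `i` in the mixed profile `σ`. -/
noncomputable def EU {ι : Type*} [Fintype ι] [DecidableEq ι] {S : ι → Type*}
    [∀ i, Fintype (S i)] (U : (i : ι) → (∀ j, S j) → ℝ)
    (σ : ∀ j, S j → ℝ) (i : ι) : ℝ :=
  ∑ s : ∀ j, S j, (∏ j, σ j (s j)) * U i s

/-- `σ` is a (mixed) Nash equilibrium of the game with utilities `U`. -/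
def IsNashEq {ι : Type*} [Fintype ι] [DecidableEq ι] {S : ι → Type*} [∀ i, Fintype (S i)]
    (U : (i : ι) → (∀ j, S j) → ℝ) (σ : ∀ j, S j → ℝ) : Prop :=
  (∀ i, IsDist (σ i)) ∧
    ∀ (i : ι) (τ : S i → ℝ), IsDist τ →
      EU U (Function.update σ i τ) i ≤ EU U σ i

/-! ## The player and strategy sets of the game `G(Ĝ, φ)` -/

/-- The players: the two special players (`Sum.inl`), plus `k` further players. -/
abbrev Player (k : ℕ) : Type := Fin 2 ⊕ Fin k

/-- A literal `ℓ_j` (second component `true`) or `ℓ̄_j` (second component `false`). -/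
abbrev Lit (n : ℕ) : Type := Fin n × Bool

/-- A pair variable `v_{j,k}` with `j ≠ k`. -/
abbrev PairVar (n : ℕ) : Type := {p : Fin n × Fin n // p.1 ≠ p.2}

/-- The non-gadget strategies of a special player: literals, clauses and pair variables. -/
abbrev SpecialAux (n m : ℕ) : Type := Lit n ⊕ (Fin m ⊕ PairVar n)

/-- The strategy set of each player of `G(Ĝ, φ)`: gadget strategies together with the
literals, clauses and pair variables (for the special players), resp. the single extra
strategy `δ` (for the non-special players). -/
def Strat {k : ℕ} (Shat : Player k → Type) (n m : ℕ) : Player k → Type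
  | .inl p => Shat (.inl p) ⊕ SpecialAux n m
  | .inr q => Shat (.inr q) ⊕ PUnit

instance {k n m : ℕ} (Shat : Player k → Type) [∀ i, Fintype (Shat i)]
    (i : Player k) : Fintype (Strat Shat n m i) := by
  cases i with
  | inl p => exact inferInstanceAs (Fintype (Shat (.inl p) ⊕ SpecialAux n m))
  | inr q => exact inferInstanceAs (Fintype (Shat (.inr q) ⊕ PUnit))

/-- The gadget strategy underlying a strategy of `G(Ĝ, φ)`, if any. -/
def toGadget {k n m : ℕ} (Shat : Player k → Type) :
    ∀ i : Player k, Strat Shat n m i → Option (Shat i)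
  | .inl _, .inl a => some a
  | .inl _, .inr _ => none
  | .inr _, .inl a => some a
  | .inr _, .inr _ => none

/-- The strategy chosen by the special player `q` in the profile `s`. -/
def specialOf {k n m : ℕ} (Shat : Player k → Type) (q : Fin 2)
    (s : ∀ j, Strat Shat n m j) : Shat (.inl q) ⊕ SpecialAux n m :=
  s (.inl q)

/-- The other special player. -/
def otherP : Fin 2 → Fin 2 := fun p => if p = 0 then 1 else 0

/-- Whether a strategy of a special player lies in `{ℓ₀, ℓ̄₀, ℓ₁, ℓ̄₁} ∪ 𝒞 ∪ V`
(Case (10) of the utility table). -/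
def allowedB {n m : ℕ} {α : Type*} : α ⊕ SpecialAux n m → Bool
  | .inl _ => false
  | .inr (.inl l) => decide (l.1.val ≤ 1)
  | .inr (.inr _) => true

/-- Utilities ⟨player 1, player 2, each non-special player⟩ in a profile in which the
special players choose the non-gadget strategies `a₁`, `a₂` and every non-special player
chooses `δ` (Cases (1)–(6) and part of Case (11) of the utility table).  The cyclic
difference `I(ℓ′) − I(ℓ)` is computed as `(I(ℓ′) + n − I(ℓ)) % n`. -/
noncomputable def pairU {n m : ℕ} (Cl : Fin m → Finset (Lit n)) :
    SpecialAux n m → SpecialAux n m → ℝ × ℝ × ℝ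
  | .inl l, .inl l' =>
      if l' = (l.1, !l.2) then (0, 0, 1)
      else if (l'.1.val + n - l.1.val) % n ≤ 1 then (1, 0, 1)
      else if (l'.1.val + n - l.1.val) % n ≤ 3 then (0, 1, 1)
      else (0, 0, 1)
  | .inl l, .inr (.inl c) => if (l.1, !l.2) ∈ Cl c then (0, 1, 1) else (0, 0, 0)
  | .inl l, .inr (.inr v) => if l.1 = v.1.1 ∨ l.1 = v.1.2 then (0, 1, 1) else (0, 0, 0)
  | .inr (.inl c), .inl l => if (l.1, !l.2) ∈ Cl c then (1, 0, 1) else (0, 0, 0)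
  | .inr (.inr v), .inl l => if l.1 = v.1.1 ∨ l.1 = v.1.2 then (1, 0, 1) else (0, 0, 0)
  | .inr _, .inr _ => (0, 0, 0)

/-- The utility function of the game `G(Ĝ, φ)`, following Cases (1)–(11) of the
utility table. -/
noncomputable def BigU {k n m : ℕ} (Shat : Player k → Type) [∀ i, Fintype (Shat i)]
    (Uhat : (i : Player k) → (∀ j, Shat j) → ℝ) (Cl : Fin m → Finset (Lit n))
    (i : Player k) (s : ∀ j, Strat Shat n m j) : ℝ :=
  -- Case (7): all players choose gadget strategies
  if h : ∀ j, (toGadget Shat j (s j)).isSome = true then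
    Uhat i (fun j => (toGadget Shat j (s j)).get (h j))
  -- Case (8): at least two, but not all, players choose gadget strategies
  else if 1 < (univ.filter fun j => (toGadget Shat j (s j)).isSome = true).card then
    if (toGadget Shat i (s i)).isSome then 1 else 0
  -- Cases (9), (10), (11): exactly one player chooses a gadget strategy
  else if (univ.filter fun j => (toGadget Shat j (s j)).isSome = true).card = 1 then
    if (toGadget Shat i (s i)).isSome then
      match i with
      | .inl p => if allowedB (specialOf Shat (otherP p) s) then 1 else 0
      | .inr _ => 1
    else 0
  -- Cases (1)–(6), (11): no player chooses a gadget strategy, so every non-special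
  -- player chooses `δ` and the special players choose non-gadget strategies
  else
    match specialOf Shat 0 s, specialOf Shat 1 s with
    | .inr a₁, .inr a₂ =>
        (match i with
         | .inl p => if p = 0 then (pairU Cl a₁ a₂).1 else (pairU Cl a₁ a₂).2.1
         | .inr _ => (pairU Cl a₁ a₂).2.2)
    | _, _ => 0

/-- A mixed profile of the gadget game `Ĝ`, regarded as a mixed profile of `G(Ĝ, φ)`
via the inclusions `Σ̂ᵢ ⊆ Σᵢ`. -/
def liftProfile {k n m : ℕ} (Shat : Player k → Type)
    (σh : ∀ i, Shat i → ℝ) : ∀ i, Strat Shat n m i → ℝ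
  | .inl p => Sum.elim (σh (.inl p)) (fun _ => 0)
  | .inr q => Sum.elim (σh (.inr q)) (fun _ => 0)

/-- The strategy "literal `(j, b)`" of the special player `p`. -/
def litStrat {k n m : ℕ} (Shat : Player k → Type) (p : Fin 2) (j : Fin n) (b : Bool) :
    Strat Shat n m (Sum.inl p) :=
  Sum.inr (Sum.inl (j, b))

/-- The strategy `δ` of the non-special player `q`. -/
def deltaStrat {k n m : ℕ} (Shat : Player k → Type) (q : Fin k) :
    Strat Shat n m (Sum.inr q) :=
  Sum.inr PUnit.unit

/-- The assignment `γ` satisfies the 3SAT formula with clauses `Cl`. -/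
def Satisfies {n m : ℕ} (Cl : Fin m → Finset (Lit n)) (γ : Fin n → Bool) : Prop :=
  ∀ c, ∃ l ∈ Cl c, γ l.1 = l.2

/-- The mixed profile `σ(γ)` of `G(Ĝ, φ)` associated with an assignment `γ`:
each special player plays each of the `n` literals set true by `γ` with probability
`1/n`, and each non-special player plays `δ` with probability `1`. -/
noncomputable def assignProfile {k n : ℕ} (m : ℕ) (Shat : Player k → Type)
    (γ : Fin n → Bool) : ∀ i, Strat Shat n m i → ℝ
  | .inl _ => fun t =>
      match t with
      | .inr (.inl l) => if γ l.1 = l.2 then 1 / (n : ℝ) else 0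
      | _ => 0
  | .inr _ => fun t =>
      match t with
      | .inr _ => 1
      | .inl _ => 0

/-!
Facing `σ(γ)`, a special player meets a uniformly random literal set true by `γ`, and every
pure strategy earns utility `1` against some of these `n` literals and `0` against the others.
Gadget strategies, pair variables and literals each win against at most two indices; a clause
wins only against its false literals, of which there are at most two because `γ` satisfies it.
A literal set true by `γ` wins against exactly two indices, so the pure strategies in the
support attain the maximal value `2 / n`.
A unilateral deviation puts at most one of the at least two players into the gadget, so `Ĝ`
itself is never reached, and a non-special player has utility `1` whatever she plays.
-/

section FiniteGames

/-- The mixed strategy that plays `t` with probability one. -/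
noncomputable def pureStrategy {α : Type*} (t : α) : α → ℝ :=
  Set.indicator {t} 1

theorem pureStrategy_ne_zero_iff {α : Type*} {t u : α} : pureStrategy t u ≠ 0 ↔ u = t := by
  simp [pureStrategy]

theorem sum_mul_pureStrategy {α : Type*} [Fintype α] (x : α → ℝ) (u : α) :
    ∑ t, x t * pureStrategy t u = x u := by
  classical
  simp [pureStrategy, Set.indicator_apply]

theorem isDist_pureStrategy {α : Type*} [Fintype α] (t : α) : IsDist (pureStrategy t) := by
  classical
  exact ⟨fun u => Set.indicator_nonneg (fun _ _ => zero_le_one) u,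
    by simp [pureStrategy, Set.indicator_apply]⟩

variable {ι : Type*} [DecidableEq ι] {S : ι → Type*} [∀ i, Fintype (S i)]
  {U : (i : ι) → (∀ j, S j) → ℝ} {σ : ∀ j, S j → ℝ}

theorem isDist_update (hσ : ∀ j, IsDist (σ j)) (i : ι) {τ : S i → ℝ} (hτ : IsDist τ) (j : ι) :
    IsDist (Function.update σ i τ j) := by
  obtain rfl | hj := eq_or_ne j i
  · rwa [Function.update_self]
  · rw [Function.update_of_ne hj]
    exact hσ j

variable [Fintype ι]

theorem sum_prod_mul_apply (hσ : ∀ j, IsDist (σ j)) (i : ι) (f : S i → ℝ) :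
    ∑ s : ∀ j, S j, (∏ j, σ j (s j)) * f (s i) = ∑ t, σ i t * f t := by
  set τ := Function.update σ i (fun t => σ i t * f t) with hτ
  have prod_eq (s : ∀ j, S j) : (∏ j, σ j (s j)) * f (s i) = ∏ j, τ j (s j) := by
    rw [Fintype.prod_eq_mul_prod_compl i, Fintype.prod_eq_mul_prod_compl i (fun j => τ j (s j)),
      mul_right_comm, hτ, Function.update_self]
    refine congrArg _ (Finset.prod_congr rfl fun j hj => ?_)
    rw [Function.update_of_ne (by simpa using hj)]
  calc ∑ s : ∀ j, S j, (∏ j, σ j (s j)) * f (s i)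
      = ∏ j, ∑ t, τ j t := by simp_rw [prod_eq, Fintype.prod_sum]
    _ = ∑ t, τ i t := Fintype.prod_eq_single i fun j hj => by
        rw [hτ, Function.update_of_ne hj, (hσ j).2]
    _ = ∑ t, σ i t * f t := by rw [hτ, Function.update_self]

theorem EU_eq_sum_of_support (hσ : ∀ j, IsDist (σ j)) {i l : ι} {f : S l → ℝ}
    (hU : ∀ s, (∀ j, σ j (s j) ≠ 0) → U i s = f (s l)) : EU U σ i = ∑ t, σ l t * f t := by
  rw [← sum_prod_mul_apply hσ]
  refine Finset.sum_congr rfl fun s _ => ?_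
  by_cases hs : ∀ j, σ j (s j) ≠ 0
  · rw [hU s hs]
  · have : ∏ j, σ j (s j) = 0 := by
      simpa [Finset.prod_eq_zero_iff] using hs
    rw [this, zero_mul, zero_mul]

theorem EU_update_eq_sum_pureStrategy (i l : ι) (τ : S i → ℝ) :
    EU U (Function.update σ i τ) l =
      ∑ t, τ t * EU U (Function.update σ i (pureStrategy t)) l := by
  have prod_update (τ' : S i → ℝ) (s : ∀ j, S j) :
      ∏ j, Function.update σ i τ' j (s j) = τ' (s i) * ∏ j ∈ univ \ {i}, σ j (s j) := by
    simp_rw [Function.apply_update (fun j (x : S j → ℝ) => x (s j))]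
    exact Finset.prod_update_of_mem (mem_univ i) _ _
  simp_rw [EU, Finset.mul_sum]
  rw [Finset.sum_comm]
  refine Finset.sum_congr rfl fun s _ => ?_
  simp_rw [prod_update, ← mul_assoc, ← Finset.sum_mul, sum_mul_pureStrategy]

theorem EU_eq_of_pureStrategy_eq {i : ι} {v : ℝ} (hσ : IsDist (σ i))
    (heq : ∀ t, σ i t ≠ 0 → EU U (Function.update σ i (pureStrategy t)) i = v) :
    EU U σ i = v := by
  calc EU U σ i = ∑ t, σ i t * EU U (Function.update σ i (pureStrategy t)) i := by
        rw [← EU_update_eq_sum_pureStrategy, Function.update_eq_self]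
    _ = ∑ t, σ i t * v := Finset.sum_congr rfl fun t _ => by
        by_cases ht : σ i t = 0
        · rw [ht, zero_mul, zero_mul]
        · rw [heq t ht]
    _ = v := by rw [← Finset.sum_mul, hσ.2, one_mul]

theorem EU_update_le_of_pureStrategy_le {i : ι} {v : ℝ} {τ : S i → ℝ} (hτ : IsDist τ)
    (hle : ∀ t, EU U (Function.update σ i (pureStrategy t)) i ≤ v) :
    EU U (Function.update σ i τ) i ≤ v := by
  rw [EU_update_eq_sum_pureStrategy]
  calc ∑ t, τ t * EU U (Function.update σ i (pureStrategy t)) i ≤ ∑ t, τ t * v :=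
        Finset.sum_le_sum fun t _ => mul_le_mul_of_nonneg_left (hle t) (hτ.1 t)
    _ = v := by rw [← Finset.sum_mul, hτ.2, one_mul]

end FiniteGames

section Counting

theorem card_filter_val_div_two_eq {n : ℕ} (hn : 4 ≤ n) (p : Fin 2) :
    #{d : Fin n | d.val / 2 = p.val} = 2 := by
  have : ({d : Fin n | d.val / 2 = p.val} : Finset (Fin n)) =
      {⟨2 * p.val, by omega⟩, ⟨2 * p.val + 1, by omega⟩} := by
    ext d
    simp only [mem_filter, mem_univ, true_and, mem_insert, mem_singleton, Fin.ext_iff]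
    omega
  rw [this, Finset.card_pair (by simp)]

theorem card_filter_sub_right {n : ℕ} (i : Fin n) (P : Fin n → Prop) [DecidablePred P] :
    #{x | P (x - i)} = #{d | P d} := by
  have := i.neZero
  exact Finset.card_equiv (Equiv.subRight i) (by simp)

theorem card_filter_sub_left {n : ℕ} (i : Fin n) (P : Fin n → Prop) [DecidablePred P] :
    #{x | P (i - x)} = #{d | P d} := by
  have := i.neZero
  exact Finset.card_equiv (Equiv.subLeft i) (by simp)

theorem card_false_literals_lt {V : Type*} [Fintype V] [DecidableEq V] {C : Finset (V × Bool)}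
    {γ : V → Bool} (hγ : ∃ l ∈ C, γ l.1 = l.2) : #{x | (x, !γ x) ∈ C} < #C := by
  obtain ⟨l, hl, htrue⟩ := hγ
  have hinj : Function.Injective fun x => (x, !γ x) := fun x y h => congrArg Prod.fst h
  rw [← Finset.card_image_of_injective _ hinj]
  refine Finset.card_lt_card (Finset.ssubset_iff_of_subset ?_ |>.2 ⟨l, hl, ?_⟩)
  · simp [Finset.image_subset_iff]
  · intro hfalse
    obtain ⟨x, -, rfl⟩ := Finset.mem_image.1 hfalse
    simp at htrue

end Counting

section BeatenIndices

variable {n m : ℕ} {α : Type*} {Cl : Fin m → Finset (Lit n)} {γ : Fin n → Bool}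

/-- The indices `x` for which the special player `p` has utility `1` when she plays the given
strategy, the other special player plays the literal of index `x` set true by `γ`, and everybody
else plays `δ`. With `I(ℓ') - I(ℓ)` taken from the literal of player `0` to that of player `1`,
player `0` wins for the differences `0, 1` and player `1` for `2, 3`, so that the winner is half
the difference. -/
def beatenIndices (Cl : Fin m → Finset (Lit n)) (γ : Fin n → Bool) (p : Fin 2) :
    α ⊕ SpecialAux n m → Finset (Fin n)
  | .inl _ => {x | x.val ≤ 1}
  | .inr (.inl l) =>
      {x | (x, γ x) ≠ (l.1, !l.2) ∧ (if p = 0 then x - l.1 else l.1 - x).val / 2 = p.val}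
  | .inr (.inr (.inl c)) => {x | (x, !γ x) ∈ Cl c}
  | .inr (.inr (.inr v)) => {v.1.1, v.1.2}

theorem card_filter_cyclic_window (hn : 4 ≤ n) (p : Fin 2) (i : Fin n) :
    #{x : Fin n | (if p = 0 then x - i else i - x).val / 2 = p.val} = 2 := by
  split_ifs
  · exact (card_filter_sub_right i (·.val / 2 = p.val)).trans (card_filter_val_div_two_eq hn p)
  · exact (card_filter_sub_left i (·.val / 2 = p.val)).trans (card_filter_val_div_two_eq hn p)

theorem card_beatenIndices_le_two (hn : 4 ≤ n) (hCl : ∀ c, #(Cl c) ≤ 3) (hγ : Satisfies Cl γ)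
    (p : Fin 2) (t : α ⊕ SpecialAux n m) : #(beatenIndices Cl γ p t) ≤ 2 := by
  rcases t with _ | l | c | v
  · rw [← card_filter_val_div_two_eq hn 0]
    exact Finset.card_le_card (Finset.monotone_filter_right _ fun x _ (hx : x.val ≤ 1) => by
      simpa using Nat.div_eq_of_lt (Nat.lt_succ_of_le hx))
  · rw [← card_filter_cyclic_window hn p l.1]
    exact Finset.card_le_card (Finset.monotone_filter_right _ fun _ _ h => h.2)
  · exact Nat.le_of_lt_succ ((card_false_literals_lt (hγ c)).trans_le (hCl c))
  · exact Finset.card_le_two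

theorem card_beatenIndices_true_literal (hn : 4 ≤ n) (p : Fin 2) (i : Fin n) :
    #(beatenIndices (α := α) Cl γ p (.inr (.inl (i, γ i)))) = 2 := by
  rw [← card_filter_cyclic_window hn p i]
  refine congrArg _ (Finset.filter_congr fun x _ => and_iff_right ?_)
  intro h
  obtain ⟨rfl, h⟩ := Prod.mk.inj h
  simp at h

theorem add_sub_mod_eq_val_sub (i j : Fin n) :
    (j.val + n - i.val) % n = (j - i).val := by
  rw [Fin.val_sub, add_comm, Nat.sub_add_comm i.is_lt.le]

theorem pairU_fst_eq_ite (a : SpecialAux n m) (x : Fin n) :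
    (pairU Cl a (.inl (x, γ x))).1 =
      if x ∈ beatenIndices (α := α) Cl γ 0 (.inr a) then 1 else 0 := by
  rcases a with l | c | v <;>
    simp only [pairU, beatenIndices, add_sub_mod_eq_val_sub, mem_filter, mem_univ, true_and,
      mem_insert, mem_singleton, ite_true, Fin.val_zero] <;>
    grind

theorem pairU_snd_fst_eq_ite (a : SpecialAux n m) (x : Fin n) :
    (pairU Cl (.inl (x, γ x)) a).2.1 =
      if x ∈ beatenIndices (α := α) Cl γ 1 (.inr a) then 1 else 0 := by
  have hneg (l : Lit n) : l = (x, !γ x) ↔ (x, γ x) = (l.1, !l.2) := by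
    simp only [Prod.ext_iff]
    grind
  rcases a with l | c | v <;>
    simp only [pairU, beatenIndices, add_sub_mod_eq_val_sub, hneg, mem_filter, mem_univ, true_and,
      mem_insert, mem_singleton, one_ne_zero, ite_false, Fin.val_one] <;>
    grind

theorem pairU_literals_snd_snd (l l' : Lit n) : (pairU Cl (.inl l) (.inl l')).2.2 = 1 := by
  simp only [pairU]
  split_ifs <;> rfl

end BeatenIndices

section Utilities

variable {k n m : ℕ} {Shat : Player k → Type} [∀ i, Fintype (Shat i)]
  {Uhat : (i : Player k) → (∀ j, Shat j) → ℝ} {Cl : Fin m → Finset (Lit n)}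
  {s : ∀ j, Strat Shat n m j}

theorem BigU_of_forall_toGadget_eq_none (hs : ∀ j, toGadget Shat j (s j) = none)
    {a b : SpecialAux n m} (ha : specialOf Shat 0 s = .inr a) (hb : specialOf Shat 1 s = .inr b)
    (i : Player k) :
    BigU Shat Uhat Cl i s = Sum.elim
      (fun p => if p = 0 then (pairU Cl a b).1 else (pairU Cl a b).2.1)
      (fun _ => (pairU Cl a b).2.2) i := by
  have hall : ¬ ∀ j, (toGadget Shat j (s j)).isSome = true := fun h => by
    simpa [hs] using h (.inl 0)
  unfold BigU
  rw [dif_neg hall, ha, hb]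
  cases i <;> simp [hs]

theorem BigU_of_unique_gadget {i : Player k} (hi : (toGadget Shat i (s i)).isSome = true)
    (hs : ∀ j ≠ i, toGadget Shat j (s j) = none) :
    BigU Shat Uhat Cl i s = Sum.elim
      (fun p => if allowedB (specialOf Shat (otherP p) s) then 1 else 0) (fun _ => 1) i := by
  have hset : ({j | (toGadget Shat j (s j)).isSome = true} : Finset (Player k)) = {i} := by
    ext j
    obtain rfl | hj := eq_or_ne j i
    · simp [hi]
    · simp [hs j hj, hj]
  have hall : ¬ ∀ j, (toGadget Shat j (s j)).isSome = true := fun h => by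
    have : Nontrivial (Player k) := Sum.inl_injective.nontrivial
    obtain ⟨j, hj⟩ := exists_ne i
    simpa [hs j hj] using h j
  unfold BigU
  rw [dif_neg hall, hset, card_singleton, if_neg (lt_irrefl 1), if_pos rfl, if_pos hi]
  cases i <;> rfl

theorem otherP_ne (p : Fin 2) : otherP p ≠ p := by
  decide +revert

theorem eq_otherP_of_ne {p q : Fin 2} (h : q ≠ p) : q = otherP p := by
  decide +revert

theorem BigU_inl_eq_ite {γ : Fin n → Bool} {p : Fin 2} {x : Fin n}
    (hx : s (.inl (otherP p)) = litStrat Shat (otherP p) x (γ x))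
    (hδ : ∀ q, s (.inr q) = deltaStrat Shat q) :
    BigU Shat Uhat Cl (.inl p) s =
      if x ∈ beatenIndices Cl γ p (specialOf Shat p s) then 1 else 0 := by
  have hothers : ∀ j ≠ .inl p, toGadget Shat j (s j) = none := by
    rintro (q | q) hq
    · obtain rfl := eq_otherP_of_ne (hq <| congrArg Sum.inl ·)
      rw [hx]
      rfl
    · rw [hδ]
      rfl
  have hother : specialOf Shat (otherP p) s = .inr (.inl (x, γ x)) := hx
  rcases ht : specialOf Shat p s with g | a
  · have hgadget : toGadget Shat (.inl p) (s (.inl p)) = some g := by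
      rw [show s (.inl p) = Sum.inl g from ht]
      rfl
    rw [BigU_of_unique_gadget (by rw [hgadget]; rfl) hothers, Sum.elim_inl, hother]
    simp only [allowedB, beatenIndices, decide_eq_true_eq, mem_filter, mem_univ, true_and]
  · have hnone (j : Player k) : toGadget Shat j (s j) = none := by
      obtain rfl | hj := eq_or_ne j (.inl p)
      · rw [show s (.inl p) = Sum.inr a from ht]
        rfl
      · exact hothers j hj
    obtain rfl | rfl : p = 0 ∨ p = 1 := by omega
    · rw [BigU_of_forall_toGadget_eq_none hnone ht hother, ← pairU_fst_eq_ite]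
      rfl
    · rw [BigU_of_forall_toGadget_eq_none hnone hother ht, ← pairU_snd_fst_eq_ite]
      rfl

theorem BigU_inr_eq_one {q : Fin k}
    (hlit : ∀ p, ∃ l : Lit n, s (.inl p) = litStrat Shat p l.1 l.2)
    (hδ : ∀ q' ≠ q, s (.inr q') = deltaStrat Shat q') :
    BigU Shat Uhat Cl (.inr q) s = 1 := by
  have hothers : ∀ j ≠ .inr q, toGadget Shat j (s j) = none := by
    rintro (p | q') hq
    · obtain ⟨l, hl⟩ := hlit p
      rw [hl]
      rfl
    · rw [hδ q' (hq <| congrArg Sum.inr ·)]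
      rfl
  by_cases hgadget : (toGadget Shat (.inr q) (s (.inr q))).isSome = true
  · exact BigU_of_unique_gadget hgadget hothers
  · have hnone (j : Player k) : toGadget Shat j (s j) = none := by
      obtain rfl | hj := eq_or_ne j (.inr q)
      · simpa using hgadget
      · exact hothers j hj
    obtain ⟨l₀, h₀⟩ := hlit 0
    obtain ⟨l₁, h₁⟩ := hlit 1
    rw [BigU_of_forall_toGadget_eq_none hnone h₀ h₁]
    exact pairU_literals_snd_snd l₀ l₁

end Utilities

section AssignProfile

variable {k n m : ℕ} {Shat : Player k → Type} {γ : Fin n → Bool}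

theorem assignProfile_litStrat (p : Fin 2) (j : Fin n) :
    assignProfile m Shat γ (.inl p) (litStrat Shat p j (γ j)) = 1 / (n : ℝ) :=
  if_pos rfl

theorem exists_eq_litStrat_of_assignProfile_ne_zero {p : Fin 2} {t : Strat Shat n m (.inl p)}
    (ht : assignProfile m Shat γ (.inl p) t ≠ 0) : ∃ j, t = litStrat Shat p j (γ j) := by
  rcases t with _ | ⟨j, b⟩ | _
  · exact absurd rfl ht
  · obtain rfl : γ j = b := (ite_ne_right_iff.1 ht).1
    exact ⟨j, rfl⟩
  · exact absurd rfl ht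

theorem eq_deltaStrat_of_assignProfile_ne_zero {q : Fin k} {t : Strat Shat n m (.inr q)}
    (ht : assignProfile m Shat γ (.inr q) t ≠ 0) : t = deltaStrat Shat q := by
  rcases t with _ | _
  · exact absurd rfl ht
  · rfl

theorem litStrat_true_injective (p : Fin 2) :
    Function.Injective fun j => (litStrat Shat p j (γ j) : Strat Shat n m (.inl p)) :=
  fun _ _ h => congrArg Prod.fst (Sum.inl.inj (Sum.inr.inj h))

theorem setOf_assignProfile_pos (hn : 0 < n) (p : Fin 2) :
    {t : Strat Shat n m (.inl p) | 0 < assignProfile m Shat γ (.inl p) t} =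
      Set.range fun j => litStrat Shat p j (γ j) := by
  ext t
  constructor
  · intro ht
    obtain ⟨j, rfl⟩ := exists_eq_litStrat_of_assignProfile_ne_zero (ne_of_gt ht)
    exact ⟨j, rfl⟩
  · rintro ⟨j, rfl⟩
    exact (by positivity : (0 : ℝ) < 1 / n).trans_eq (assignProfile_litStrat p j).symm

theorem ncard_setOf_assignProfile_pos (hn : 0 < n) (p : Fin 2) :
    {t : Strat Shat n m (.inl p) | 0 < assignProfile m Shat γ (.inl p) t}.ncard = n := by
  rw [setOf_assignProfile_pos hn, Set.ncard_range_of_injective (litStrat_true_injective p),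
    Nat.card_fin]

theorem assignProfile_ne_liftProfile (hn : 0 < n) (σh : ∀ i, Shat i → ℝ) :
    assignProfile m Shat γ ≠ liftProfile Shat σh := by
  intro h
  have hzero := congrFun (congrFun h (.inl 0)) (litStrat Shat 0 ⟨0, hn⟩ (γ ⟨0, hn⟩))
  rw [assignProfile_litStrat] at hzero
  exact (by positivity : 1 / (n : ℝ) ≠ 0) hzero

variable [∀ i, Fintype (Shat i)]

theorem sum_assignProfile_inl_mul (p : Fin 2) (f : Strat Shat n m (.inl p) → ℝ) :
    ∑ t, assignProfile m Shat γ (.inl p) t * f t =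
      1 / (n : ℝ) * ∑ j, f (litStrat Shat p j (γ j)) := by
  rw [Finset.mul_sum]
  symm
  refine Finset.sum_of_injOn _ (litStrat_true_injective (γ := γ) p).injOn (by simp) ?_ ?_
  · intro t _ ht
    by_contra h
    obtain ⟨j, rfl⟩ := exists_eq_litStrat_of_assignProfile_ne_zero (left_ne_zero_of_mul h)
    exact ht ⟨j, by simp, rfl⟩
  · intro j _
    rw [assignProfile_litStrat]

theorem isDist_assignProfile (hn : 0 < n) (i : Player k) :
    IsDist (assignProfile m Shat γ i) := by
  rcases i with p | q
  · constructor
    · rintro (_ | l | _)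
      · exact le_rfl
      · exact ite_nonneg (by positivity) le_rfl
      · exact le_rfl
    · simpa [hn.ne'] using sum_assignProfile_inl_mul (m := m) (Shat := Shat) (γ := γ) p 1
  · constructor
    · rintro (_ | _)
      · exact le_rfl
      · exact zero_le_one
    · refine Fintype.sum_eq_single (deltaStrat Shat q) fun t ht => ?_
      by_contra h
      exact ht (eq_deltaStrat_of_assignProfile_ne_zero h)

variable {Uhat : (i : Player k) → (∀ j, Shat j) → ℝ} {Cl : Fin m → Finset (Lit n)}

theorem EU_assignProfile_update_inl (hn : 0 < n) (p : Fin 2) (t : Strat Shat n m (.inl p)) :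
    EU (BigU Shat Uhat Cl)
        (Function.update (assignProfile m Shat γ) (.inl p) (pureStrategy t)) (.inl p) =
      #(beatenIndices Cl γ p t) / n := by
  classical
  let wins : Strat Shat n m (.inl (otherP p)) → ℝ :=
    Set.indicator ((fun x => litStrat Shat (otherP p) x (γ x)) '' beatenIndices Cl γ p t) 1
  have wins_lit (x : Fin n) : wins (litStrat Shat (otherP p) x (γ x)) =
      if x ∈ beatenIndices Cl γ p t then 1 else 0 := by
    simp only [wins, Set.indicator_apply, Pi.one_apply]
    exact if_congr ((litStrat_true_injective (otherP p)).mem_set_image.trans mem_coe) rfl rfl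
  have hother : (.inl (otherP p) : Player k) ≠ .inl p := fun h => otherP_ne p (Sum.inl.inj h)
  rw [EU_eq_sum_of_support (l := .inl (otherP p)) (f := wins)
    (isDist_update (isDist_assignProfile hn) _ (isDist_pureStrategy t)) fun s hs => ?_]
  · rw [Function.update_of_ne hother, sum_assignProfile_inl_mul]
    simp_rw [wins_lit]
    rw [Finset.sum_boole, Finset.filter_univ_mem, one_div_mul_eq_div]
  · have hp : s (.inl p) = t := pureStrategy_ne_zero_iff.1 (by simpa using hs (.inl p))
    have hσ (j : Player k) (hj : j ≠ .inl p) : assignProfile m Shat γ j (s j) ≠ 0 := by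
      simpa [hj] using hs j
    obtain ⟨x, hx⟩ := exists_eq_litStrat_of_assignProfile_ne_zero (hσ _ hother)
    have hδ (q : Fin k) : s (.inr q) = deltaStrat Shat q :=
      eq_deltaStrat_of_assignProfile_ne_zero (hσ _ Sum.inr_ne_inl)
    rw [BigU_inl_eq_ite hx hδ, hx, wins_lit, specialOf, hp]

theorem EU_assignProfile_update_inr (hn : 0 < n) (q : Fin k) (t : Strat Shat n m (.inr q)) :
    EU (BigU Shat Uhat Cl)
        (Function.update (assignProfile m Shat γ) (.inr q) (pureStrategy t)) (.inr q) = 1 := by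
  have hdist := isDist_update (isDist_assignProfile (m := m) (Shat := Shat) (γ := γ) hn) (.inr q)
    (isDist_pureStrategy t)
  rw [EU_eq_sum_of_support (l := .inr q) (f := 1) hdist fun s hs => ?_]
  · simpa using (hdist (.inr q)).2
  · have hσ (j : Player k) (hj : j ≠ .inr q) : assignProfile m Shat γ j (s j) ≠ 0 := by
      simpa [hj] using hs j
    refine BigU_inr_eq_one (fun p => ?_) fun q' hq' => ?_
    · obtain ⟨x, hx⟩ := exists_eq_litStrat_of_assignProfile_ne_zero (hσ _ Sum.inl_ne_inr)
      exact ⟨(x, γ x), hx⟩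
    · exact eq_deltaStrat_of_assignProfile_ne_zero (hσ _ (hq' <| Sum.inr.inj ·))

theorem EU_assignProfile_inl (hn : 4 ≤ n) (p : Fin 2) :
    EU (BigU Shat Uhat Cl) (assignProfile m Shat γ) (.inl p) = 2 / (n : ℝ) := by
  refine EU_eq_of_pureStrategy_eq (isDist_assignProfile (by omega) _) fun t ht => ?_
  obtain ⟨j, rfl⟩ := exists_eq_litStrat_of_assignProfile_ne_zero ht
  rw [EU_assignProfile_update_inl (by omega), litStrat, card_beatenIndices_true_literal hn,
    Nat.cast_two]

theorem EU_assignProfile_inr (hn : 0 < n) (q : Fin k) :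
    EU (BigU Shat Uhat Cl) (assignProfile m Shat γ) (.inr q) = 1 :=
  EU_eq_of_pureStrategy_eq (isDist_assignProfile hn _) fun t _ =>
    EU_assignProfile_update_inr hn q t

theorem isNashEq_assignProfile (hn : 4 ≤ n) (hCl : ∀ c, #(Cl c) ≤ 3) (hγ : Satisfies Cl γ) :
    IsNashEq (BigU Shat Uhat Cl) (assignProfile m Shat γ) := by
  have hpos : 0 < n := by omega
  refine ⟨isDist_assignProfile hpos, ?_⟩
  rintro (p | q) τ hτ
  · rw [EU_assignProfile_inl hn]
    refine EU_update_le_of_pureStrategy_le hτ fun t => ?_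
    rw [EU_assignProfile_update_inl hpos]
    gcongr
    exact_mod_cast card_beatenIndices_le_two hn hCl hγ p t
  · rw [EU_assignProfile_inr hpos]
    exact EU_update_le_of_pureStrategy_le hτ fun t => (EU_assignProfile_update_inr hpos q t).le

end AssignProfile

theorem reduction_satisfying_assignment_nash_general
    {k n m : ℕ} (hn : 4 ≤ n)
    (Shat : Player k → Type) [∀ i, Fintype (Shat i)]
    (Uhat : (i : Player k) → (∀ j, Shat j) → ℝ)
    (Cl : Fin m → Finset (Lit n)) (hCl : ∀ c, #(Cl c) ≤ 3)
    (γ : Fin n → Bool) (hγ : Satisfies Cl γ) :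
    IsNashEq (BigU Shat Uhat Cl) (assignProfile m Shat γ) ∧
    (¬ ∃ σh : ∀ i, Shat i → ℝ,
      IsNashEq Uhat σh ∧ assignProfile m Shat γ = liftProfile Shat σh) ∧
    (∀ a : SpecialAux n m,
      assignProfile m Shat γ (Sum.inl 0) (Sum.inr a) =
        assignProfile m Shat γ (Sum.inl 1) (Sum.inr a)) ∧
    (∀ p : Fin 2,
      {t : Strat Shat n m (Sum.inl p) |
        0 < assignProfile m Shat γ (Sum.inl p) t}.ncard = n) ∧
    (∀ p : Fin 2,
      EU (BigU Shat Uhat Cl) (assignProfile m Shat γ) (Sum.inl p) = 2 / (n : ℝ)) ∧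
    (∀ (p : Fin 2) (a : Shat (Sum.inl p)),
      assignProfile m Shat γ (Sum.inl p) (Sum.inl a) = 0) := by
  have hpos : 0 < n := by omega
  refine ⟨isNashEq_assignProfile hn hCl hγ, ?_, ?_, ncard_setOf_assignProfile_pos hpos,
    EU_assignProfile_inl hn, fun _ _ => rfl⟩
  · rintro ⟨σh, -, h⟩
    exact assignProfile_ne_liftProfile hpos σh h
  · rintro (l | c) <;> rfl

/-- For the win-lose game `G = G(Ĝ, φ)` built from an `r`-player win-lose gadget game
`Ĝ` with the positive utility property and a 3SAT formula `φ` with `n ≥ 4` variables: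
for each satisfying assignment `γ` of `φ`, the mixed profile `σ(γ)` is a Nash
equilibrium of `G` not belonging to `NE(Ĝ)`; moreover it is symmetric (the two special
players play the same mixed strategy), each special player has support of size exactly
`n` and expected utility `2/n`, and the special players' supports avoid the gadget
strategies. -/
theorem reduction_satisfying_assignment_nash
    {k n m : ℕ} (hn : 4 ≤ n)
    (Shat : Player k → Type) [∀ i, Fintype (Shat i)] [∀ i, Nonempty (Shat i)]
    (Uhat : (i : Player k) → (∀ j, Shat j) → ℝ)
    (hWL : ∀ i s, Uhat i s = 0 ∨ Uhat i s = 1)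
    (hPUP : ∀ (i : Player k) (s : ∀ j, Shat j), ∃ t, 0 < Uhat i (Function.update s i t))
    (Cl : Fin m → Finset (Lit n)) (h3 : ∀ c, (Cl c).card = 3)
    (γ : Fin n → Bool) (hγ : Satisfies Cl γ) :
    IsNashEq (BigU Shat Uhat Cl) (assignProfile m Shat γ) ∧
    (¬ ∃ σh : ∀ i, Shat i → ℝ,
      IsNashEq Uhat σh ∧ assignProfile m Shat γ = liftProfile Shat σh) ∧
    (∀ a : SpecialAux n m,
      assignProfile m Shat γ (Sum.inl 0) (Sum.inr a) =
        assignProfile m Shat γ (Sum.inl 1) (Sum.inr a)) ∧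
    (∀ p : Fin 2,
      {t : Strat Shat n m (Sum.inl p) |
        0 < assignProfile m Shat γ (Sum.inl p) t}.ncard = n) ∧
    (∀ p : Fin 2,
      EU (BigU Shat Uhat Cl) (assignProfile m Shat γ) (Sum.inl p) = 2 / (n : ℝ)) ∧
    (∀ (p : Fin 2) (a : Shat (Sum.inl p)),
      assignProfile m Shat γ (Sum.inl p) (Sum.inl a) = 0) :=
  reduction_satisfying_assignment_nash_general hn Shat Uhat Cl (fun c => (h3 c).le) γ hγ
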